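/- arXiv:2106.03277 — 9 statements merged into one kernel-verified Lean document; each statement's English description precedes it below -/
import Mathlib

section
/- Let (A,·,α) be a commutative Hom-associative algebra, (V,β) a pair of a vector space and a linear endomorphism, and s : A → End(V) a linear map such that (s,β,V) is a bimodule of (A,·,α), i.e. s(x·y)β(v) = s(α(x))(s(y)v) and β(s(x)v) = s(α(x))β(v) for all x,y ∈ A, v ∈ V. Then the direct sum A ⊕ V equipped with the product (x₁+v₁)·'(x₂+v₂) = x₁·x₂ + s(x₁)v₂ + s(x₂)v₁ and the linear map (α⊕β)(x+v) = α(x)+β(v) is a commutative Hom-associative algebra, i.e. ·' is commutative and ((u₁·'u₂)·'(α⊕β)(u₃)) = ((α⊕β)(u₁))·'(u₂·'u₃) for all u₁,u₂,u₃ ∈ A⊕V. -/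
/-!
Since `s (α x) ∘ s y = s (x · y) ∘ β` and `x · y = y · x`, the operator `s (α x) ∘ s y` is
symmetric in `x` and `y`. Expanding both sides of Hom-associativity in the `V`-component, this
symmetry and the bimodule law itself match the three summands one by one.
-/

theorem twisted_action_left_comm {A V : Type*} {mul : A → A → A} {α : A → A} {act : A → V → V}
    {β : V → V} (hcomm : ∀ x y, mul x y = mul y x)
    (hact : ∀ x y v, act (mul x y) (β v) = act (α x) (act y v)) (x y : A) (v : V) :
    act (α x) (act y v) = act (α y) (act x v) := by
  rw [← hact, hcomm, hact]

section SemidirectSum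

variable {A V : Type*} [AddCommMonoid V]
  {mul : A → A → A} {α : A → A} {s : A → V →+ V} {β : V → V}

/-- The product of the semidirect sum `A ⊕ V`, modelled on `A × V`, of an algebra `A` with product
`mul` acting on `V` through `s`; the elements of `V` multiply to zero among themselves.
Here `mul` and `s` are plain functions on `A`, and each `s x` is additive. -/
def semidirectMul (mul : A → A → A) (s : A → V →+ V) (u w : A × V) : A × V :=
  (mul u.1 w.1, s u.1 w.2 + s w.1 u.2)

theorem semidirectMul_comm (hcomm : ∀ x y, mul x y = mul y x) (u w : A × V) :
    semidirectMul mul s u w = semidirectMul mul s w u :=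
  Prod.ext (hcomm u.1 w.1) (add_comm _ _)

theorem semidirectMul_hom_assoc (hcomm : ∀ x y, mul x y = mul y x)
    (hassoc : ∀ x y z, mul (mul x y) (α z) = mul (α x) (mul y z))
    (hs : ∀ x y v, s (mul x y) (β v) = s (α x) (s y v)) (u₁ u₂ u₃ : A × V) :
    semidirectMul mul s (semidirectMul mul s u₁ u₂) (Prod.map α β u₃) =
      semidirectMul mul s (Prod.map α β u₁) (semidirectMul mul s u₂ u₃) := by
  obtain ⟨x₁, v₁⟩ := u₁
  obtain ⟨x₂, v₂⟩ := u₂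
  obtain ⟨x₃, v₃⟩ := u₃
  have left_comm (x y : A) (v : V) : s (α x) (s y v) = s (α y) (s x v) :=
    twisted_action_left_comm (act := fun x v ↦ s x v) hcomm hs x y v
  refine Prod.ext (hassoc x₁ x₂ x₃) ?_
  calc s (mul x₁ x₂) (β v₃) + s (α x₃) (s x₁ v₂ + s x₂ v₁)
      = s (α x₁) (s x₂ v₃) + (s (α x₃) (s x₁ v₂) + s (α x₃) (s x₂ v₁)) := by
        rw [hs, map_add]
    _ = s (α x₁) (s x₂ v₃) + (s (α x₁) (s x₃ v₂) + s (α x₂) (s x₃ v₁)) := by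
        rw [left_comm x₃ x₁, left_comm x₃ x₂]
    _ = s (α x₁) (s x₂ v₃ + s x₃ v₂) + s (mul x₂ x₃) (β v₁) := by
        rw [hs, map_add, add_assoc]

theorem semidirect_comm_hom_assoc_general (hcomm : ∀ x y, mul x y = mul y x)
    (hassoc : ∀ x y z, mul (mul x y) (α z) = mul (α x) (mul y z))
    (hs : ∀ x y v, s (mul x y) (β v) = s (α x) (s y v)) :
    (∀ u w, semidirectMul mul s u w = semidirectMul mul s w u) ∧
    (∀ u₁ u₂ u₃, semidirectMul mul s (semidirectMul mul s u₁ u₂) (Prod.map α β u₃) =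
      semidirectMul mul s (Prod.map α β u₁) (semidirectMul mul s u₂ u₃)) :=
  ⟨semidirectMul_comm hcomm, semidirectMul_hom_assoc hcomm hassoc hs⟩

end SemidirectSum

/-- The semidirect sum of a commutative Hom-associative algebra with a
bimodule is a commutative Hom-associative algebra. -/
theorem semidirect_comm_hom_assoc
    {K A V : Type*} [Field K] [CharZero K]
    [AddCommGroup A] [Module K A] [AddCommGroup V] [Module K V]
    (mul : A →ₗ[K] A →ₗ[K] A) (α : A →ₗ[K] A)
    (hcomm : ∀ x y : A, mul x y = mul y x)
    (hassoc : ∀ x y z : A, mul (mul x y) (α z) = mul (α x) (mul y z))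
    (s : A →ₗ[K] V →ₗ[K] V) (β : V →ₗ[K] V)
    (hb1 : ∀ (x y : A) (v : V), s (mul x y) (β v) = s (α x) (s y v))
    (hb2 : ∀ (x : A) (v : V), β (s x v) = s (α x) (β v))
    (mul' : (A × V) → (A × V) → (A × V))
    (hmul' : ∀ u w : A × V, mul' u w = (mul u.1 w.1, s u.1 w.2 + s w.1 u.2))
    (αβ : (A × V) → (A × V))
    (hαβ : ∀ u : A × V, αβ u = (α u.1, β u.2)) :
    (∀ u w : A × V, mul' u w = mul' w u) ∧
    (∀ u₁ u₂ u₃ : A × V, mul' (mul' u₁ u₂) (αβ u₃) = mul' (αβ u₁) (mul' u₂ u₃)) := by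
  obtain ⟨rfl, rfl⟩ : mul' = semidirectMul (mul · ·) (fun x ↦ s x) ∧ αβ = Prod.map α β :=
    ⟨funext₂ hmul', funext hαβ⟩
  exact semidirect_comm_hom_assoc_general hcomm hassoc hb1
end

section
/- Let (A,·,α) be a multiplicative commutative Hom-associative algebra and let D₁, D₂ be derivations of (A,·,α) (so αDᵢ = Dᵢα and Dᵢ(x·y) = Dᵢ(x)·y + x·Dᵢ(y)) with D₁D₂ = D₂D₁. Define {x,y} = D₁(x)·D₂(y) − D₁(y)·D₂(x). Then (A,·,{·,·},α) is a Hom-Poisson algebra: (A,{·,·},α) is a Hom-Lie algebra and the Hom-Leibniz identity {x·y,α(z)} = {x,z}·α(y) + α(x)·{y,z} holds for all x,y,z ∈ A. -/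
/-!
Each `Dᵢ` is a derivation of the bracket, because `D₁` and `D₂` commute. Expanding
`{α x, {y, z}}` accordingly, the terms containing second derivatives of `z` form a Hessian
`H(x, y; z)` of `z` along the Hamiltonian fields `{x, ·}` and `{y, ·}`, and those containing second
derivatives of `y` form `-H(x, z; y)`. The twisted triple product `α x · (y · z)` is symmetric, so
`H(x, y; z) = H(y, x; z)`, and the cyclic sum of `H(x, y; z) - H(x, z; y)` cancels in pairs.
-/

section HomAlgebra

variable {R A : Type*} [CommSemiring R] [AddCommGroup A] [Module R A]

/-- Commutative Hom-associative algebras, the product being a bilinear map and `α` the twist. -/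
structure IsCommHomAssoc (mul : A →ₗ[R] A →ₗ[R] A) (α : A →ₗ[R] A) : Prop where
  comm : ∀ x y : A, mul x y = mul y x
  assoc : ∀ x y z : A, mul (mul x y) (α z) = mul (α x) (mul y z)

/-- Derivations of the algebra `(A, mul, α)`; they are required to commute with the twist. -/
structure IsHomDerivation (mul : A →ₗ[R] A →ₗ[R] A) (α D : A →ₗ[R] A) : Prop where
  twist_comm : ∀ x : A, α (D x) = D (α x)
  map_mul : ∀ x y : A, D (mul x y) = mul (D x) y + mul x (D y)

/-- Hom-Lie algebras, with skew-symmetry stated as `{x, y} = -{y, x}` (weaker than `{x, x} = 0`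
in the presence of 2-torsion). -/
structure IsHomLie (br : A →ₗ[R] A →ₗ[R] A) (α : A →ₗ[R] A) : Prop where
  skew : ∀ x y : A, br x y = -br y x
  jacobi : ∀ x y z : A, br (α x) (br y z) + br (α y) (br z x) + br (α z) (br x y) = 0

/-- Hom-Poisson algebras: a commutative Hom-associative product and a Hom-Lie bracket with the
same twist, related by the Hom-Leibniz identity. -/
structure IsHomPoisson (mul br : A →ₗ[R] A →ₗ[R] A) (α : A →ₗ[R] A) : Prop
    extends IsCommHomAssoc mul α, IsHomLie br α where
  leibniz : ∀ x y z : A, br (mul x y) (α z) = mul (br x z) (α y) + mul (α x) (br y z)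

/-- The Poisson bracket `{x, y} = D₁ x · D₂ y - D₁ y · D₂ x` of the bivector `D₁ ∧ D₂`. -/
def derivationBracket (mul : A →ₗ[R] A →ₗ[R] A) (D₁ D₂ : A →ₗ[R] A) : A →ₗ[R] A →ₗ[R] A :=
  mul.compl₁₂ D₁ D₂ - (mul.compl₁₂ D₁ D₂).flip

/-- The twisted Hessian `H(x, y; z)` of `z` along the Hamiltonian fields `D₁ x · D₂ - D₂ x · D₁`
and `D₁ y · D₂ - D₂ y · D₁`: their composite applied to `z`, without the first-order terms. -/
def hamiltonianHessian (mul : A →ₗ[R] A →ₗ[R] A) (α D₁ D₂ : A →ₗ[R] A) (x y z : A) : A :=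
  mul (α (D₁ x)) (mul (D₁ y) (D₂ (D₂ z)) - mul (D₂ y) (D₁ (D₂ z))) -
    mul (α (D₂ x)) (mul (D₁ y) (D₁ (D₂ z)) - mul (D₂ y) (D₁ (D₁ z)))

variable {mul : A →ₗ[R] A →ₗ[R] A} {α D D₁ D₂ : A →ₗ[R] A}

namespace IsCommHomAssoc

theorem left_comm (hA : IsCommHomAssoc mul α) (x y z : A) :
    mul (α x) (mul y z) = mul (α y) (mul x z) := by
  rw [← hA.assoc, hA.comm x y, hA.assoc]

theorem right_comm (hA : IsCommHomAssoc mul α) (x y z : A) :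
    mul (mul x y) (α z) = mul (mul x z) (α y) := by
  rw [hA.assoc, hA.comm y z, ← hA.assoc]

theorem hamiltonianHessian_comm (hA : IsCommHomAssoc mul α) (x y z : A) :
    hamiltonianHessian mul α D₁ D₂ x y z = hamiltonianHessian mul α D₁ D₂ y x z := by
  simp only [hamiltonianHessian, map_sub]
  rw [hA.left_comm (D₁ x) (D₁ y), hA.left_comm (D₁ x) (D₂ y),
    hA.left_comm (D₂ x) (D₁ y), hA.left_comm (D₂ x) (D₂ y)]
  abel

end IsCommHomAssoc

theorem IsHomDerivation.map_mul_mul_twist (hD : IsHomDerivation mul α D)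
    (hA : IsCommHomAssoc mul α) (x y w : A) :
    mul (D (mul x y)) (α w) = mul (mul (D x) w) (α y) + mul (α x) (mul (D y) w) := by
  rw [hD.map_mul, map_add, LinearMap.add_apply, hA.right_comm (D x), hA.assoc x]

theorem derivationBracket_apply (x y : A) :
    derivationBracket mul D₁ D₂ x y = mul (D₁ x) (D₂ y) - mul (D₁ y) (D₂ x) :=
  rfl

theorem derivationBracket_skew (x y : A) :
    derivationBracket mul D₁ D₂ x y = -derivationBracket mul D₁ D₂ y x := by
  simp only [derivationBracket_apply, neg_sub]

theorem map_derivationBracket (hD : ∀ x y : A, D (mul x y) = mul (D x) y + mul x (D y))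
    (h₁ : Commute D D₁) (h₂ : Commute D D₂) (x y : A) :
    D (derivationBracket mul D₁ D₂ x y) =
      derivationBracket mul D₁ D₂ (D x) y + derivationBracket mul D₁ D₂ x (D y) := by
  have hDD₁ (a : A) : D (D₁ a) = D₁ (D a) := LinearMap.congr_fun h₁.eq a
  have hDD₂ (a : A) : D (D₂ a) = D₂ (D a) := LinearMap.congr_fun h₂.eq a
  simp only [derivationBracket_apply, map_sub, hD, hDD₁, hDD₂]
  abel

theorem derivationBracket_twist_derivationBracket (hcomm : ∀ x y : A, mul x y = mul y x)
    (h₁ : IsHomDerivation mul α D₁) (h₂ : IsHomDerivation mul α D₂) (h : Commute D₁ D₂)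
    (x y z : A) :
    derivationBracket mul D₁ D₂ (α x) (derivationBracket mul D₁ D₂ y z) =
      hamiltonianHessian mul α D₁ D₂ x y z - hamiltonianHessian mul α D₁ D₂ x z y := by
  have hDD (a : A) : D₂ (D₁ a) = D₁ (D₂ a) := LinearMap.congr_fun h.symm.eq a
  rw [derivationBracket_apply (α x), ← h₁.twist_comm, ← h₂.twist_comm,
    hcomm _ (α (D₂ x)), map_derivationBracket h₁.map_mul (.refl D₁) h,
    map_derivationBracket h₂.map_mul h.symm (.refl D₂)]
  simp only [derivationBracket_apply, hamiltonianHessian, map_add, map_sub, hDD,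
    hcomm (D₁ (D₁ _)), hcomm (D₁ (D₂ _))]
  abel

theorem derivationBracket_jacobi (hA : IsCommHomAssoc mul α)
    (h₁ : IsHomDerivation mul α D₁) (h₂ : IsHomDerivation mul α D₂) (h : Commute D₁ D₂)
    (x y z : A) :
    derivationBracket mul D₁ D₂ (α x) (derivationBracket mul D₁ D₂ y z) +
      derivationBracket mul D₁ D₂ (α y) (derivationBracket mul D₁ D₂ z x) +
      derivationBracket mul D₁ D₂ (α z) (derivationBracket mul D₁ D₂ x y) = 0 := by
  simp only [derivationBracket_twist_derivationBracket hA.comm h₁ h₂ h]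
  rw [hA.hamiltonianHessian_comm y x, hA.hamiltonianHessian_comm z x,
    hA.hamiltonianHessian_comm z y]
  abel

theorem derivationBracket_leibniz (hA : IsCommHomAssoc mul α)
    (h₁ : IsHomDerivation mul α D₁) (h₂ : IsHomDerivation mul α D₂) (x y z : A) :
    derivationBracket mul D₁ D₂ (mul x y) (α z) =
      mul (derivationBracket mul D₁ D₂ x z) (α y) +
        mul (α x) (derivationBracket mul D₁ D₂ y z) := by
  calc
    derivationBracket mul D₁ D₂ (mul x y) (α z)
      = mul (D₁ (mul x y)) (α (D₂ z)) - mul (D₂ (mul x y)) (α (D₁ z)) := by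
        rw [derivationBracket_apply, ← h₁.twist_comm, ← h₂.twist_comm, hA.comm (α (D₁ z))]
    _ = (mul (mul (D₁ x) (D₂ z)) (α y) + mul (α x) (mul (D₁ y) (D₂ z))) -
          (mul (mul (D₂ x) (D₁ z)) (α y) + mul (α x) (mul (D₂ y) (D₁ z))) := by
        rw [h₁.map_mul_mul_twist hA, h₂.map_mul_mul_twist hA]
    _ = mul (derivationBracket mul D₁ D₂ x z) (α y) +
          mul (α x) (derivationBracket mul D₁ D₂ y z) := by
        simp only [derivationBracket_apply, hA.comm (D₁ z), map_sub, LinearMap.sub_apply]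
        abel

theorem homPoisson_of_two_commuting_derivations_general (hA : IsCommHomAssoc mul α)
    (h₁ : IsHomDerivation mul α D₁) (h₂ : IsHomDerivation mul α D₂) (h : Commute D₁ D₂) :
    IsHomPoisson mul (derivationBracket mul D₁ D₂) α where
  toIsCommHomAssoc := hA
  skew := derivationBracket_skew
  jacobi := derivationBracket_jacobi hA h₁ h₂ h
  leibniz := derivationBracket_leibniz hA h₁ h₂

end HomAlgebra

/-- Two commuting derivations of a multiplicative commutative
Hom-associative algebra yield a Hom-Poisson algebra. -/
theorem homPoisson_of_two_commuting_derivations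
    {K A : Type*} [Field K] [CharZero K] [AddCommGroup A] [Module K A]
    (mul : A →ₗ[K] A →ₗ[K] A) (α : A →ₗ[K] A)
    (hcomm : ∀ x y : A, mul x y = mul y x)
    (hassoc : ∀ x y z : A, mul (mul x y) (α z) = mul (α x) (mul y z))
    (hmult : ∀ x y : A, α (mul x y) = mul (α x) (α y))
    (D₁ D₂ : A →ₗ[K] A)
    (hD₁α : ∀ x : A, α (D₁ x) = D₁ (α x))
    (hD₂α : ∀ x : A, α (D₂ x) = D₂ (α x))
    (hD₁ : ∀ x y : A, D₁ (mul x y) = mul (D₁ x) y + mul x (D₁ y))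
    (hD₂ : ∀ x y : A, D₂ (mul x y) = mul (D₂ x) y + mul x (D₂ y))
    (hDD : ∀ x : A, D₁ (D₂ x) = D₂ (D₁ x))
    (br : A → A → A)
    (hbr : ∀ x y : A, br x y = mul (D₁ x) (D₂ y) - mul (D₁ y) (D₂ x)) :
    (∀ x y : A, br x y = - br y x) ∧
    (∀ x y z : A, br (α x) (br y z) + br (α y) (br z x) + br (α z) (br x y) = 0) ∧
    (∀ x y z : A, br (mul x y) (α z) = mul (br x z) (α y) + mul (α x) (br y z)) := by
  obtain rfl : br = fun x y => derivationBracket mul D₁ D₂ x y := funext₂ hbr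
  have h := homPoisson_of_two_commuting_derivations_general ⟨hcomm, hassoc⟩
    ⟨hD₁α, hD₁⟩ ⟨hD₂α, hD₂⟩ (LinearMap.ext hDD)
  exact ⟨h.skew, h.jacobi, h.leibniz⟩
end

section
/- Let (A,·,{·,·}) be a transposed Poisson algebra. Then for all x,y,z,t ∈ A, {x·z, y·t} + {x·t, y·z} = 2(z·t)·{x,y}. -/
/-!
The transposed Leibniz identity says that every multiplication operator is a ½-derivation of the
bracket. If `f`, `g` and `f ∘ g` are all ½-derivations, expand `4 f(g [x, y])` by applying the
identity first for `g` and then for `f`: besides the two mixed terms `[f x, g y] + [g x, f y]` one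
finds `[f(g x), y] + [x, f(g y)]`, which is `2 f(g [x, y])` by the identity for `f ∘ g`. The mixed
terms therefore account for the remaining `2 f(g [x, y])`.
-/

section HalfDerivation

variable {R A : Type*} [CommSemiring R] [AddCommGroup A] [Module R A]

/-- `f` is a ½-derivation of the bilinear bracket `br`. The defining equation
`f [x, y] = ½ ([f x, y] + [x, f y])` is multiplied by `2`, so that `2` need not be invertible. -/
def IsHalfDerivation (br : A →ₗ[R] A →ₗ[R] A) (f : Module.End R A) : Prop :=
  ∀ x y : A, (2 : R) • f (br x y) = br (f x) y + br x (f y)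

theorem IsHalfDerivation.bracket_add_bracket_eq_two_smul {br : A →ₗ[R] A →ₗ[R] A}
    {f g : Module.End R A} (hf : IsHalfDerivation br f) (hg : IsHalfDerivation br g)
    (hfg : IsHalfDerivation br (f * g)) (x y : A) :
    br (f x) (g y) + br (g x) (f y) = (2 : R) • f (g (br x y)) := by
  have hcomp : (2 : R) • f (g (br x y)) = br (f (g x)) y + br x (f (g y)) := hfg x y
  have hexpand : (2 : R) • f (g (br x y)) + (2 : R) • f (g (br x y)) =
      (2 : R) • f (g (br x y)) + (br (f x) (g y) + br (g x) (f y)) :=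
    calc (2 : R) • f (g (br x y)) + (2 : R) • f (g (br x y))
        = (2 : R) • f ((2 : R) • g (br x y)) := by rw [map_smul, two_smul R ((2 : R) • _)]
      _ = (2 : R) • f (br (g x) y) + (2 : R) • f (br x (g y)) := by
          rw [hg x y, map_add, smul_add]
      _ = (br (f (g x)) y + br (g x) (f y)) + (br (f x) (g y) + br x (f (g y))) := by
          rw [hf (g x) y, hf x (g y)]
      _ = (2 : R) • f (g (br x y)) + (br (f x) (g y) + br (g x) (f y)) := by
          rw [hcomp]; abel
  exact (add_left_cancel hexpand).symm

theorem transposedPoisson_identity_general (mul br : A →ₗ[R] A →ₗ[R] A)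
    (hcomm : ∀ x y : A, mul x y = mul y x)
    (hassoc : ∀ x y z : A, mul (mul x y) z = mul x (mul y z))
    (hleib : ∀ x y z : A, (2 : R) • mul z (br x y) = br (mul z x) y + br x (mul z y))
    (x y z t : A) :
    br (mul x z) (mul y t) + br (mul x t) (mul y z) = (2 : R) • mul (mul z t) (br x y) := by
  have hmul (a : A) : IsHalfDerivation br (mul a) := fun x y ↦ hleib x y a
  have hcomp : mul (mul z t) = mul z * mul t := LinearMap.ext (hassoc z t)
  rw [hcomm x z, hcomm y t, hcomm x t, hcomm y z, hassoc]
  exact (hmul z).bracket_add_bracket_eq_two_smul (hmul t) (hcomp ▸ hmul (mul z t)) x y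

end HalfDerivation

/-- In a transposed Poisson algebra,
{x·z, y·t} + {x·t, y·z} = 2(z·t)·{x,y}. -/
theorem transposedPoisson_identity
    {K A : Type*} [Field K] [CharZero K] [AddCommGroup A] [Module K A]
    (mul : A →ₗ[K] A →ₗ[K] A) (br : A →ₗ[K] A →ₗ[K] A)
    (hcomm : ∀ x y : A, mul x y = mul y x)
    (hassoc : ∀ x y z : A, mul (mul x y) z = mul x (mul y z))
    (hskew : ∀ x y : A, br x y = - br y x)
    (hjac : ∀ x y z : A, br x (br y z) + br y (br z x) + br z (br x y) = 0)
    (hleib : ∀ x y z : A, (2 : K) • mul z (br x y) = br (mul z x) y + br x (mul z y)) :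
    ∀ x y z t : A,
      br (mul x z) (mul y t) + br (mul x t) (mul y z) = (2 : K) • mul (mul z t) (br x y) :=
  transposedPoisson_identity_general mul br hcomm hassoc hleib
end

section
/- Let (A,·,{·,·},α) be a transposed Hom-Poisson algebra. Then for all x,y,z ∈ A, α(x)·{y,z} + α(y)·{z,x} + α(z)·{x,y} = 0. -/
/-!
Skew-symmetry turns the transposed Hom-Leibniz identity into
`2 α(z)·{x,y} = {α(x), z·y} - {α(y), z·x}`. When `x`, `y`, `z` are permuted cyclically, each term
on the right-hand side occurs once with each sign, because `·` is commutative. So twice the cyclic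
sum telescopes to zero.
-/

/-- The transposed Hom-Leibniz identity, the compatibility of product and bracket in a transposed
Hom-Poisson algebra. The factor `2` is a natural number, so that no scalar ring is involved. -/
def TransposedHomLeibniz {A : Type*} [AddMonoid A] (mul br : A → A → A) (α : A → A) : Prop :=
  ∀ x y z, 2 • mul (α z) (br x y) = br (mul z x) (α y) + br (α x) (mul z y)

namespace TransposedHomLeibniz

variable {A : Type*} [AddCommGroup A] {mul br : A → A → A} {α : A → A}

theorem two_nsmul_mul_br (hleib : TransposedHomLeibniz mul br α)
    (hskew : ∀ x y, br x y = -br y x) (x y z : A) :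
    2 • mul (α z) (br x y) = br (α x) (mul z y) - br (α y) (mul z x) := by
  rw [hleib, hskew (mul z x), neg_add_eq_sub]

theorem two_nsmul_cyclic_sum_eq_zero (hleib : TransposedHomLeibniz mul br α)
    (hcomm : ∀ x y, mul x y = mul y x) (hskew : ∀ x y, br x y = -br y x) (x y z : A) :
    2 • (mul (α x) (br y z) + mul (α y) (br z x) + mul (α z) (br x y)) = 0 := by
  calc
    2 • (mul (α x) (br y z) + mul (α y) (br z x) + mul (α z) (br x y))
    _ = (br (α y) (mul x z) - br (α z) (mul x y)) + (br (α z) (mul y x) - br (α x) (mul y z)) +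
          (br (α x) (mul z y) - br (α y) (mul z x)) := by
      simp only [smul_add, hleib.two_nsmul_mul_br hskew]
    _ = 0 := by
      rw [hcomm y x, hcomm z y, hcomm z x]
      abel

end TransposedHomLeibniz

theorem transposedHomPoisson_cyclic_identity_general {A : Type*} [AddCommGroup A]
    (htwo : IsSMulRegular A (2 : ℕ)) {mul br : A → A → A} {α : A → A}
    (hcomm : ∀ x y, mul x y = mul y x) (hskew : ∀ x y, br x y = -br y x)
    (hleib : TransposedHomLeibniz mul br α) (x y z : A) :
    mul (α x) (br y z) + mul (α y) (br z x) + mul (α z) (br x y) = 0 :=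
  htwo.right_eq_zero_of_smul (hleib.two_nsmul_cyclic_sum_eq_zero hcomm hskew x y z)

/-- In a transposed Hom-Poisson algebra,
α(x)·{y,z} + α(y)·{z,x} + α(z)·{x,y} = 0. -/
theorem transposedHomPoisson_cyclic_identity
    {K A : Type*} [Field K] [CharZero K] [AddCommGroup A] [Module K A]
    (mul : A →ₗ[K] A →ₗ[K] A) (br : A →ₗ[K] A →ₗ[K] A) (α : A →ₗ[K] A)
    (hcomm : ∀ x y : A, mul x y = mul y x)
    (hassoc : ∀ x y z : A, mul (mul x y) (α z) = mul (α x) (mul y z))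
    (hskew : ∀ x y : A, br x y = - br y x)
    (hjac : ∀ x y z : A, br (α x) (br y z) + br (α y) (br z x) + br (α z) (br x y) = 0)
    (hleib : ∀ x y z : A,
      (2 : K) • mul (α z) (br x y) = br (mul z x) (α y) + br (α x) (mul z y)) :
    ∀ x y z : A, mul (α x) (br y z) + mul (α y) (br z x) + mul (α z) (br x y) = 0 := by
  have := IsAddTorsionFree.of_isTorsionFree K A
  exact transposedHomPoisson_cyclic_identity_general (.of_ne_zero two_ne_zero) hcomm hskew
    fun x y z ↦ (ofNat_smul_eq_nsmul K 2 _).symm.trans (hleib x y z)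
end

section
/- Let A be a vector space equipped with a bilinear product · making (A,·,α) a commutative Hom-associative algebra and a bilinear bracket {·,·} making (A,{·,·},α) a Hom-Lie algebra. Then (A,·,{·,·},α) is simultaneously a Hom-Poisson algebra (i.e. {x·y,α(z)} = {x,z}·α(y) + α(x)·{y,z} for all x,y,z) and a transposed Hom-Poisson algebra (i.e. 2α(z)·{x,y} = {z·x,α(y)} + {α(x),z·y} for all x,y,z) if and only if α(x)·{y,z} = 0 and {x·y,α(z)} = 0 for all x,y,z ∈ A. -/
/-!
Put `T x y z = α(x)·{y,z}`. Expanding the right-hand side of the transposed Leibniz rule by the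
Leibniz rule produces `2 T z x y` once more, and what remains says that `T` is symmetric in its
outer arguments. It is skew-symmetric in its last two arguments, and the two transpositions are
conjugate in `S₃`, so `T = -T`. Once `T = 0`, the Leibniz rule reads `{x·y,α(z)} = 0`.
-/

/-- The Leibniz rule of a Hom-Poisson algebra, for operations `mul = ·`, `br = {·,·}` and a
twisting map `α` that are arbitrary functions. -/
def HomLeibnizRule {A : Type*} [Add A] (mul br : A → A → A) (α : A → A) : Prop :=
  ∀ x y z, br (mul x y) (α z) = mul (br x z) (α y) + mul (α x) (br y z)

/-- The dual Leibniz rule of a transposed Hom-Poisson algebra, for arbitrary functions as in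
`HomLeibnizRule`. The factor `2` acts as a natural number, so that no scalars are involved. -/
def TransposedHomLeibnizRule {A : Type*} [AddMonoid A] (mul br : A → A → A) (α : A → A) : Prop :=
  ∀ x y z, 2 • mul (α z) (br x y) = br (mul z x) (α y) + br (α x) (mul z y)

theorem eq_zero_of_symm_of_skew {X A : Type*} [AddGroup A] (two_regular : IsSMulRegular A (2 : ℕ))
    {T : X → X → X → A} (symm : ∀ x y z, T x y z = T z y x) (skew : ∀ x y z, T x y z = -T x z y)
    (x y z : X) : T x y z = 0 := by
  have eq_neg : T x y z = -T x y z := calc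
    T x y z = T z y x := symm x y z
    _ = -T z x y := skew z y x
    _ = -T y x z := by rw [symm z x y]
    _ = T y z x := by rw [skew y x z, neg_neg]
    _ = T x z y := symm y z x
    _ = -T x y z := skew x z y
  exact two_regular.right_eq_zero_of_smul (by rw [two_nsmul, ← eq_neg_iff_add_eq_zero, ← eq_neg])

section

variable {A : Type*} [AddCommGroup A] {mul br : A → A → A} {α : A → A}

theorem HomLeibnizRule.mul_br_symm (hL : HomLeibnizRule mul br α)
    (hT : TransposedHomLeibnizRule mul br α) (mul_comm : ∀ x y, mul x y = mul y x)
    (mul_neg : ∀ x y, mul x (-y) = -mul x y) (br_skew : ∀ x y, br x y = -br y x) (x y z : A) :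
    mul (α x) (br y z) = mul (α z) (br y x) := by
  have left_term : br (mul y x) (α z) = mul (α x) (br y z) + mul (α y) (br x z) := by
    rw [hL, mul_comm (br y z)]
  have right_term : br (α x) (mul y z) = mul (α y) (br x z) - mul (α z) (br y x) := by
    rw [br_skew, hL, mul_comm (br y x), br_skew z x, mul_neg]
    abel
  have transposed := hT x z y
  rw [left_term, right_term, two_nsmul] at transposed
  rw [← sub_eq_zero, ← sub_eq_zero.mpr transposed.symm]
  abel

theorem HomLeibnizRule.mul_br_eq_zero (hL : HomLeibnizRule mul br α)
    (hT : TransposedHomLeibnizRule mul br α) (two_regular : IsSMulRegular A (2 : ℕ))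
    (mul_comm : ∀ x y, mul x y = mul y x) (mul_neg : ∀ x y, mul x (-y) = -mul x y)
    (br_skew : ∀ x y, br x y = -br y x) (x y z : A) : mul (α x) (br y z) = 0 :=
  eq_zero_of_symm_of_skew two_regular (T := fun x y z => mul (α x) (br y z))
    (hL.mul_br_symm hT mul_comm mul_neg br_skew)
    (fun x y z => by rw [br_skew y z, mul_neg]) x y z

theorem HomLeibnizRule.br_mul_eq_zero (hL : HomLeibnizRule mul br α)
    (mul_comm : ∀ x y, mul x y = mul y x) (mul_br : ∀ x y z, mul (α x) (br y z) = 0)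
    (x y z : A) : br (mul x y) (α z) = 0 := by
  rw [hL, mul_comm (br x z), mul_br, mul_br, add_zero]

theorem homLeibnizRule_of_eq_zero (mul_comm : ∀ x y, mul x y = mul y x)
    (mul_br : ∀ x y z, mul (α x) (br y z) = 0) (br_mul : ∀ x y z, br (mul x y) (α z) = 0) :
    HomLeibnizRule mul br α := fun x y z => by
  rw [br_mul, mul_comm (br x z), mul_br, mul_br, add_zero]

theorem transposedHomLeibnizRule_of_eq_zero (br_skew : ∀ x y, br x y = -br y x)
    (mul_br : ∀ x y z, mul (α x) (br y z) = 0) (br_mul : ∀ x y z, br (mul x y) (α z) = 0) :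
    TransposedHomLeibnizRule mul br α := fun x y z => by
  rw [mul_br, br_mul, br_skew (α x), br_mul, nsmul_zero, neg_zero, add_zero]

variable (mul br α) in
theorem homPoisson_and_transposed_iff_trivial_general (two_regular : IsSMulRegular A (2 : ℕ))
    (mul_comm : ∀ x y, mul x y = mul y x) (mul_neg : ∀ x y, mul x (-y) = -mul x y)
    (br_skew : ∀ x y, br x y = -br y x) :
    HomLeibnizRule mul br α ∧ TransposedHomLeibnizRule mul br α ↔
      ∀ x y z, mul (α x) (br y z) = 0 ∧ br (mul x y) (α z) = 0 := by
  constructor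
  · rintro ⟨hL, hT⟩ x y z
    have mul_br := hL.mul_br_eq_zero hT two_regular mul_comm mul_neg br_skew
    exact ⟨mul_br x y z, hL.br_mul_eq_zero mul_comm mul_br x y z⟩
  · intro h
    have mul_br x y z := (h x y z).1
    have br_mul x y z := (h x y z).2
    exact ⟨homLeibnizRule_of_eq_zero mul_comm mul_br br_mul,
      transposedHomLeibnizRule_of_eq_zero br_skew mul_br br_mul⟩

end

/-- A commutative Hom-associative algebra together with a Hom-Lie
algebra is simultaneously a Hom-Poisson algebra and a transposed Hom-Poisson
algebra iff α(x)·{y,z} = 0 and {x·y,α(z)} = 0 for all x,y,z. -/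
theorem homPoisson_and_transposed_iff_trivial
    {K A : Type*} [Field K] [CharZero K] [AddCommGroup A] [Module K A]
    (mul : A →ₗ[K] A →ₗ[K] A) (br : A →ₗ[K] A →ₗ[K] A) (α : A →ₗ[K] A)
    (hcomm : ∀ x y : A, mul x y = mul y x)
    (hassoc : ∀ x y z : A, mul (mul x y) (α z) = mul (α x) (mul y z))
    (hskew : ∀ x y : A, br x y = - br y x)
    (hjac : ∀ x y z : A, br (α x) (br y z) + br (α y) (br z x) + br (α z) (br x y) = 0) :
    ((∀ x y z : A, br (mul x y) (α z) = mul (br x z) (α y) + mul (α x) (br y z)) ∧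
     (∀ x y z : A, (2 : K) • mul (α z) (br x y) = br (mul z x) (α y) + br (α x) (mul z y)))
    ↔ (∀ x y z : A, mul (α x) (br y z) = 0 ∧ br (mul x y) (α z) = 0) := by
  have two_regular : IsSMulRegular A (2 : ℕ) := by
    simpa only [IsSMulRegular, ofNat_smul_eq_nsmul] using
      IsSMulRegular.of_ne_zero (M := A) (two_ne_zero' K)
  simpa only [HomLeibnizRule, TransposedHomLeibnizRule, ofNat_smul_eq_nsmul] using
    homPoisson_and_transposed_iff_trivial_general (mul · ·) (br · ·) α two_regular hcomm
      (fun x => map_neg (mul x)) hskew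
end

section
/- Let (A,∗,α) be a Hom-pre-Lie algebra and (l,r,β,V) a bimodule of (A,∗,α). Let {x,y} = x∗y − y∗x be the sub-adjacent Hom-Lie bracket. Then (l−r, β, V) is a representation of the Hom-Lie algebra (A,{·,·},α): (l−r)({x,y})β(v) = (l−r)(α(x))((l−r)(y)v) − (l−r)(α(y))((l−r)(x)v) and β((l−r)(x)v) = (l−r)(α(x))β(v) for all x,y ∈ A, v ∈ V. -/
/-! Antisymmetrizing the axiom for `r` expresses `r {x, y} (β v)` through `l (α _) (r _ v)` and
`r (α _) ((l - r) _ v)`. Subtracting this from the axiom for `l {x, y} (β v)` combines the terms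
`l (α _) (l _ v)` and `l (α _) (r _ v)` into `l (α _) ((l - r) _ v)`. -/

section

variable {R A V : Type*} [CommRing R] [AddCommGroup A] [Module R A] [AddCommGroup V] [Module R V]

/-- The bracket `{x, y} = x ∗ y - y ∗ x` of a bilinear product `∗`, which is the sub-adjacent
Hom-Lie bracket when `∗` is a Hom-pre-Lie product. -/
def subadjacentBracket (star : A →ₗ[R] A →ₗ[R] A) : A →ₗ[R] A →ₗ[R] A :=
  star - star.flip

/-- The axioms of a representation `(ρ, β, V)` of a Hom-Lie algebra `(A, bracket, α)`. They make
sense for any bilinear `bracket`, so the Hom-Lie axioms on `A` are not part of the predicate. -/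
structure IsHomLieRep (bracket : A →ₗ[R] A →ₗ[R] A) (α : A →ₗ[R] A)
    (ρ : A →ₗ[R] V →ₗ[R] V) (β : V →ₗ[R] V) : Prop where
  bracket_apply (x y : A) (v : V) :
    ρ (bracket x y) (β v) = ρ (α x) (ρ y v) - ρ (α y) (ρ x v)
  twist_apply (x : A) (v : V) : β (ρ x v) = ρ (α x) (β v)

/-- The axioms of a bimodule `(l, r, β, V)` of a Hom-pre-Lie algebra `(A, star, α)`. The two axioms
on `l` alone say that `(l, β, V)` is a representation for the sub-adjacent bracket. The
Hom-pre-Lie identity for `star` is not part of the predicate. -/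
structure IsHomPreLieBimodule (star : A →ₗ[R] A →ₗ[R] A) (α : A →ₗ[R] A)
    (l r : A →ₗ[R] V →ₗ[R] V) (β : V →ₗ[R] V) : Prop where
  left_rep : IsHomLieRep (subadjacentBracket star) α l β
  right_sub_apply (x y : A) (v : V) :
    r (α y) ((l - r) x v) = l (α x) (r y v) - r (star x y) (β v)
  twist_right_apply (x : A) (v : V) : β (r x v) = r (α x) (β v)

variable {star : A →ₗ[R] A →ₗ[R] A} {α : A →ₗ[R] A} {l r : A →ₗ[R] V →ₗ[R] V} {β : V →ₗ[R] V}

namespace IsHomPreLieBimodule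

theorem right_star_apply (h : IsHomPreLieBimodule star α l r β) (x y : A) (v : V) :
    r (star x y) (β v) = l (α x) (r y v) - r (α y) ((l - r) x v) := by
  rw [h.right_sub_apply, sub_sub_cancel]

theorem right_subadjacentBracket_apply (h : IsHomPreLieBimodule star α l r β) (x y : A) (v : V) :
    r (subadjacentBracket star x y) (β v) =
      (l (α x) (r y v) - r (α y) ((l - r) x v)) -
        (l (α y) (r x v) - r (α x) ((l - r) y v)) := by
  simp only [subadjacentBracket, LinearMap.sub_apply, LinearMap.flip_apply, map_sub r,
    h.right_star_apply]

theorem sub_subadjacentBracket_apply (h : IsHomPreLieBimodule star α l r β) (x y : A) (v : V) :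
    (l - r) (subadjacentBracket star x y) (β v) =
      (l - r) (α x) ((l - r) y v) - (l - r) (α y) ((l - r) x v) := by
  have left_sub (a b : A) : l a ((l - r) b v) = l a (l b v) - l a (r b v) :=
    map_sub (l a) (l b v) (r b v)
  calc
    (l - r) (subadjacentBracket star x y) (β v)
    _ = (l (α x) (l y v) - l (α y) (l x v)) -
          ((l (α x) (r y v) - r (α y) ((l - r) x v)) -
            (l (α y) (r x v) - r (α x) ((l - r) y v))) := by
      rw [← h.left_rep.bracket_apply, ← h.right_subadjacentBracket_apply]
      rfl
    _ = (l (α x) ((l - r) y v) - r (α x) ((l - r) y v)) -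
          (l (α y) ((l - r) x v) - r (α y) ((l - r) x v)) := by
      rw [left_sub, left_sub]
      abel
    _ = (l - r) (α x) ((l - r) y v) - (l - r) (α y) ((l - r) x v) := rfl

theorem twist_sub_apply (h : IsHomPreLieBimodule star α l r β) (x : A) (v : V) :
    β ((l - r) x v) = (l - r) (α x) (β v) := by
  simp only [LinearMap.sub_apply, map_sub, h.left_rep.twist_apply, h.twist_right_apply]

end IsHomPreLieBimodule

theorem homLie_rep_of_homPreLie_bimodule_general (h : IsHomPreLieBimodule star α l r β) :
    IsHomLieRep (subadjacentBracket star) α (l - r) β :=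
  ⟨h.sub_subadjacentBracket_apply, h.twist_sub_apply⟩

end

/-- If (l,r,β,V) is a bimodule of a Hom-pre-Lie algebra (A,∗,α),
then (l−r,β,V) is a representation of the sub-adjacent Hom-Lie algebra. -/
theorem homLie_rep_of_homPreLie_bimodule
    {K A V : Type*} [Field K] [CharZero K]
    [AddCommGroup A] [Module K A] [AddCommGroup V] [Module K V]
    (star : A →ₗ[K] A →ₗ[K] A) (α : A →ₗ[K] A)
    (hpre : ∀ x y z : A,
      star (star x y) (α z) - star (α x) (star y z) =
        star (star y x) (α z) - star (α y) (star x z))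
    (l r : A →ₗ[K] V →ₗ[K] V) (β : V →ₗ[K] V)
    (hl : ∀ (x y : A) (v : V),
      l (star x y - star y x) (β v) = l (α x) (l y v) - l (α y) (l x v))
    (hr : ∀ (x y : A) (v : V),
      r (α y) (l x v - r x v) = l (α x) (r y v) - r (star x y) (β v))
    (hβl : ∀ (x : A) (v : V), β (l x v) = l (α x) (β v))
    (hβr : ∀ (x : A) (v : V), β (r x v) = r (α x) (β v)) :
    (∀ (x y : A) (v : V),
      l (star x y - star y x) (β v) - r (star x y - star y x) (β v) =
        (l (α x) (l y v - r y v) - r (α x) (l y v - r y v)) -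
          (l (α y) (l x v - r x v) - r (α y) (l x v - r x v))) ∧
    (∀ (x : A) (v : V), β (l x v - r x v) = l (α x) (β v) - r (α x) (β v)) := by
  have h : IsHomLieRep (subadjacentBracket star) α (l - r) β :=
    homLie_rep_of_homPreLie_bimodule_general ⟨⟨hl, hβl⟩, hr, hβr⟩
  exact ⟨h.bracket_apply, h.twist_apply⟩
end

section
/- Let (A,·,∗,α) be a Hom-pre-Lie Poisson algebra and define {x,y} = x∗y − y∗x. Then (A,·,{·,·},α) is a transposed Hom-Poisson algebra: (A,{·,·},α) is a Hom-Lie algebra and 2α(z)·{x,y} = {z·x,α(y)} + {α(x),z·y} for all x,y,z ∈ A. -/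
/-!
The Jacobiator of a commutator is the alternating sum of the six Hom-associators, so it vanishes
as soon as the Hom-associator is symmetric in its first two arguments.

For the transposed Leibniz rule, expand `{z · x, α y} + {α x, z · y}`. The two terms with a product
in the left factor of `∗` give one copy of `α z · {x, y}` by the first compatibility condition, and
the remaining `α x ∗ (z · y) - α y ∗ (z · x)` is a second copy by the other one. This is where the
factor `2` comes from.
-/

section SubAdjacent

variable {K A : Type*} [CommSemiring K] [AddCommGroup A] [Module K A]

/-- The Hom-associator `(x ∗ y) ∗ α z - α x ∗ (y ∗ z)`, whose symmetry in `x` and `y` defines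
Hom-pre-Lie algebras. The twist `α` need not be linear. -/
def homAssociator (star : A →ₗ[K] A →ₗ[K] A) (α : A → A) (x y z : A) : A :=
  star (star x y) (α z) - star (α x) (star y z)

/-- The bracket `{x, y} = x ∗ y - y ∗ x` of the sub-adjacent algebra of `(A, ∗)`, as a bilinear
map. -/
def subAdjacentBracket (star : A →ₗ[K] A →ₗ[K] A) : A →ₗ[K] A →ₗ[K] A :=
  star - star.flip

theorem subAdjacentBracket_apply (star : A →ₗ[K] A →ₗ[K] A) (x y : A) :
    subAdjacentBracket star x y = star x y - star y x :=
  rfl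

theorem subAdjacentBracket_skew (star : A →ₗ[K] A →ₗ[K] A) (x y : A) :
    subAdjacentBracket star x y = -subAdjacentBracket star y x :=
  (neg_sub (star y x) (star x y)).symm

theorem subAdjacentBracket_jacobiator (star : A →ₗ[K] A →ₗ[K] A) (α : A → A) (x y z : A) :
    subAdjacentBracket star (α x) (subAdjacentBracket star y z) +
        subAdjacentBracket star (α y) (subAdjacentBracket star z x) +
        subAdjacentBracket star (α z) (subAdjacentBracket star x y) =
      (homAssociator star α y x z - homAssociator star α x y z) +
        (homAssociator star α z y x - homAssociator star α y z x) +
        (homAssociator star α x z y - homAssociator star α z x y) := by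
  simp only [subAdjacentBracket_apply, homAssociator, map_sub]
  abel

theorem subAdjacentBracket_jacobi {star : A →ₗ[K] A →ₗ[K] A} {α : A → A}
    (hpre : ∀ x y z : A, homAssociator star α x y z = homAssociator star α y x z) (x y z : A) :
    subAdjacentBracket star (α x) (subAdjacentBracket star y z) +
        subAdjacentBracket star (α y) (subAdjacentBracket star z x) +
        subAdjacentBracket star (α z) (subAdjacentBracket star x y) = 0 := by
  rw [subAdjacentBracket_jacobiator, hpre x y z, hpre y z x, hpre z x y]
  simp only [sub_self, add_zero]

theorem subAdjacentBracket_mul_add_subAdjacentBracket_mul {mul star : A →ₗ[K] A →ₗ[K] A}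
    {α : A → A} (hcompat : ∀ x y z : A, star (mul x y) (α z) = mul (α x) (star y z))
    (x y z : A) :
    subAdjacentBracket star (mul z x) (α y) + subAdjacentBracket star (α x) (mul z y) =
      mul (α z) (subAdjacentBracket star x y) +
        (star (α x) (mul z y) - star (α y) (mul z x)) := by
  simp only [subAdjacentBracket_apply, hcompat, map_sub]
  abel

theorem mul_subAdjacentBracket {mul star : A →ₗ[K] A →ₗ[K] A} {α : A → A}
    (hcomm : ∀ x y : A, mul x y = mul y x)
    (hcompat : ∀ x y z : A,
      mul (star x y) (α z) - mul (star y x) (α z) =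
        star (α x) (mul y z) - star (α y) (mul x z)) (x y z : A) :
    mul (α z) (subAdjacentBracket star x y) =
      star (α x) (mul z y) - star (α y) (mul z x) := by
  rw [subAdjacentBracket_apply, map_sub, hcomm (α z), hcomm (α z), hcomm z y, hcomm z x]
  exact hcompat x y z

theorem two_smul_mul_subAdjacentBracket {mul star : A →ₗ[K] A →ₗ[K] A} {α : A → A}
    (hcomm : ∀ x y : A, mul x y = mul y x)
    (hcompat₁ : ∀ x y z : A, star (mul x y) (α z) = mul (α x) (star y z))
    (hcompat₂ : ∀ x y z : A,
      mul (star x y) (α z) - mul (star y x) (α z) =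
        star (α x) (mul y z) - star (α y) (mul x z)) (x y z : A) :
    (2 : K) • mul (α z) (subAdjacentBracket star x y) =
      subAdjacentBracket star (mul z x) (α y) + subAdjacentBracket star (α x) (mul z y) := by
  rw [subAdjacentBracket_mul_add_subAdjacentBracket_mul hcompat₁,
    ← mul_subAdjacentBracket hcomm hcompat₂, two_smul]

theorem transposedHomPoisson_of_homPreLiePoisson_general
    (mul star : A →ₗ[K] A →ₗ[K] A) (α : A → A)
    (hcomm : ∀ x y : A, mul x y = mul y x)
    (hpre : ∀ x y z : A, homAssociator star α x y z = homAssociator star α y x z)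
    (hcompat₁ : ∀ x y z : A, star (mul x y) (α z) = mul (α x) (star y z))
    (hcompat₂ : ∀ x y z : A,
      mul (star x y) (α z) - mul (star y x) (α z) =
        star (α x) (mul y z) - star (α y) (mul x z)) :
    (∀ x y : A, subAdjacentBracket star x y = -subAdjacentBracket star y x) ∧
    (∀ x y z : A,
      subAdjacentBracket star (α x) (subAdjacentBracket star y z) +
        subAdjacentBracket star (α y) (subAdjacentBracket star z x) +
        subAdjacentBracket star (α z) (subAdjacentBracket star x y) = 0) ∧
    (∀ x y z : A,
      (2 : K) • mul (α z) (subAdjacentBracket star x y) =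
        subAdjacentBracket star (mul z x) (α y) + subAdjacentBracket star (α x) (mul z y)) :=
  ⟨subAdjacentBracket_skew star, subAdjacentBracket_jacobi hpre,
    two_smul_mul_subAdjacentBracket hcomm hcompat₁ hcompat₂⟩

end SubAdjacent

/-- The sub-adjacent algebra of a Hom-pre-Lie Poisson algebra,
with bracket {x,y} = x∗y − y∗x, is a transposed Hom-Poisson algebra. -/
theorem transposedHomPoisson_of_homPreLiePoisson
    {K A : Type*} [Field K] [CharZero K] [AddCommGroup A] [Module K A]
    (mul : A →ₗ[K] A →ₗ[K] A) (star : A →ₗ[K] A →ₗ[K] A) (α : A →ₗ[K] A)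
    (hcomm : ∀ x y : A, mul x y = mul y x)
    (hassoc : ∀ x y z : A, mul (mul x y) (α z) = mul (α x) (mul y z))
    (hpre : ∀ x y z : A,
      star (star x y) (α z) - star (α x) (star y z) =
        star (star y x) (α z) - star (α y) (star x z))
    (hcompat1 : ∀ x y z : A, star (mul x y) (α z) = mul (α x) (star y z))
    (hcompat2 : ∀ x y z : A,
      mul (star x y) (α z) - mul (star y x) (α z) =
        star (α x) (mul y z) - star (α y) (mul x z))
    (br : A → A → A)
    (hbr : ∀ x y : A, br x y = star x y - star y x) :
    (∀ x y : A, br x y = - br y x) ∧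
    (∀ x y z : A, br (α x) (br y z) + br (α y) (br z x) + br (α z) (br x y) = 0) ∧
    (∀ x y z : A,
      (2 : K) • mul (α z) (br x y) = br (mul z x) (α y) + br (α x) (mul z y)) := by
  obtain rfl : br = fun x y ↦ subAdjacentBracket star x y := funext₂ hbr
  exact transposedHomPoisson_of_homPreLiePoisson_general mul star α hcomm hpre hcompat1 hcompat2
end

section
/- Let (A,·,α) be a commutative Hom-associative algebra, (s,β,V) a bimodule of (A,·,α), and T : V → A a linear map satisfying α∘T = T∘β and T(u)·T(v) = T(s(T(u))v + s(T(v))u) for all u,v ∈ V (an O-operator). Define u ◇ v = s(T(u))v + s(T(v))u on V. Then (V,◇,β) is a commutative Hom-associative algebra: u◇v = v◇u and (u◇v)◇β(w) = β(u)◇(v◇w) for all u,v,w ∈ V. -/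
/-!
By the O-operator identity `T (u ◇ v) = T u · T v`, the first bimodule axiom turns `(u ◇ v) ◇ β w`
into the sum, over the three ways of singling out one of `u`, `v`, `w`, of the product of the `T`
of the other two acting on the `β` of the one singled out. When `·` is commutative this sum is
invariant under cyclic permutations, so `(u ◇ v) ◇ β w = (v ◇ w) ◇ β u`, and commutativity of `◇`
turns this into Hom-associativity.
-/

section InducedProduct

variable {A V : Type*} [AddCommMonoid V]

/-- The product `u ◇ v = s (T u) v + s (T v) u` that a map `T : V → A` induces on `V`, where `A`
acts on `V` through `s`. The action is encoded as a bare family of additive maps `s x`. -/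
def inducedProduct (s : A → V →+ V) (T : V → A) (u v : V) : V :=
  s (T u) v + s (T v) u

theorem inducedProduct_comm (s : A → V →+ V) (T : V → A) (u v : V) :
    inducedProduct s T u v = inducedProduct s T v u :=
  add_comm _ _

variable {mul : A → A → A} {α : A → A} {s : A → V →+ V} {β : V → V} {T : V → A}

theorem inducedProduct_inducedProduct_map
    (hs : ∀ (x y : A) (v : V), s (mul x y) (β v) = s (α x) (s y v))
    (hTβ : ∀ v : V, α (T v) = T (β v))
    (hT : ∀ u v : V, mul (T u) (T v) = T (inducedProduct s T u v)) (u v w : V) :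
    inducedProduct s T (inducedProduct s T u v) (β w) =
      s (mul (T u) (T v)) (β w) + (s (mul (T w) (T u)) (β v) + s (mul (T w) (T v)) (β u)) :=
  calc
    inducedProduct s T (inducedProduct s T u v) (β w)
      = s (mul (T u) (T v)) (β w) + s (α (T w)) (s (T u) v + s (T v) u) := by
        rw [hT, hTβ]; rfl
    _ = s (mul (T u) (T v)) (β w) + (s (mul (T w) (T u)) (β v) + s (mul (T w) (T v)) (β u)) := by
        rw [map_add, hs (T w) (T u), hs (T w) (T v)]

theorem inducedProduct_inducedProduct_map_rotate
    (hcomm : ∀ x y : A, mul x y = mul y x)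
    (hs : ∀ (x y : A) (v : V), s (mul x y) (β v) = s (α x) (s y v))
    (hTβ : ∀ v : V, α (T v) = T (β v))
    (hT : ∀ u v : V, mul (T u) (T v) = T (inducedProduct s T u v)) (u v w : V) :
    inducedProduct s T (inducedProduct s T u v) (β w) =
      inducedProduct s T (inducedProduct s T v w) (β u) := by
  simp only [inducedProduct_inducedProduct_map hs hTβ hT]
  rw [hcomm (T w) (T u), hcomm (T w) (T v)]
  abel

theorem commHomAssoc_of_Ooperator_general
    (hcomm : ∀ x y : A, mul x y = mul y x)
    (hs : ∀ (x y : A) (v : V), s (mul x y) (β v) = s (α x) (s y v))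
    (hTβ : ∀ v : V, α (T v) = T (β v))
    (hT : ∀ u v : V, mul (T u) (T v) = T (inducedProduct s T u v)) :
    (∀ u v : V, inducedProduct s T u v = inducedProduct s T v u) ∧
    (∀ u v w : V, inducedProduct s T (inducedProduct s T u v) (β w) =
      inducedProduct s T (β u) (inducedProduct s T v w)) :=
  ⟨inducedProduct_comm s T, fun u v w =>
    (inducedProduct_inducedProduct_map_rotate hcomm hs hTβ hT u v w).trans
      (inducedProduct_comm s T _ _)⟩

end InducedProduct

/-- An O-operator on a commutative Hom-associative algebra induces a
commutative Hom-associative algebra structure on the bimodule. -/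
theorem commHomAssoc_of_Ooperator
    {K A V : Type*} [Field K] [CharZero K]
    [AddCommGroup A] [Module K A] [AddCommGroup V] [Module K V]
    (mul : A →ₗ[K] A →ₗ[K] A) (α : A →ₗ[K] A)
    (hcomm : ∀ x y : A, mul x y = mul y x)
    (hassoc : ∀ x y z : A, mul (mul x y) (α z) = mul (α x) (mul y z))
    (s : A →ₗ[K] V →ₗ[K] V) (β : V →ₗ[K] V)
    (hb1 : ∀ (x y : A) (v : V), s (mul x y) (β v) = s (α x) (s y v))
    (hb2 : ∀ (x : A) (v : V), β (s x v) = s (α x) (β v))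
    (T : V →ₗ[K] A)
    (hTβ : ∀ v : V, α (T v) = T (β v))
    (hT : ∀ u v : V, mul (T u) (T v) = T (s (T u) v + s (T v) u))
    (dia : V → V → V)
    (hdia : ∀ u v : V, dia u v = s (T u) v + s (T v) u) :
    (∀ u v : V, dia u v = dia v u) ∧
    (∀ u v w : V, dia (dia u v) (β w) = dia (β u) (dia v w)) := by
  obtain rfl : dia = inducedProduct (fun x => (s x).toAddMonoidHom) T := funext₂ hdia
  exact commHomAssoc_of_Ooperator_general hcomm hb1 hTβ hT
end

section
/- Let (A,[·,·],α) be a Hom-Lie algebra, (ρ,β,V) a representation of it, and T : V → A a linear map satisfying α∘T = T∘β and [T(u),T(v)] = T(ρ(T(u))v − ρ(T(v))u) for all u,v ∈ V (an O-operator). Define u ∗ v = ρ(T(u))v on V. Then (V,∗,β) is a Hom-pre-Lie algebra: (u∗v)∗β(w) − β(u)∗(v∗w) = (v∗u)∗β(w) − β(v)∗(u∗w) for all u,v,w ∈ V. -/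
/-!
Left multiplication by `u` in the product `u ∗ v = ρ (T u) v` is the operator `ρ (T u)`, and the
O-operator identity says that `T` carries the commutator `u ∗ v - v ∗ u` to the bracket
`[T u, T v]`. The Hom-pre-Lie identity for `u`, `v` says that left multiplication represents this
commutator, so it is the representation identity of `ρ` at `T u`, `T v`.
-/

section HomPreLie

variable {R A V : Type*} [CommSemiring R]
  [AddCommGroup A] [Module R A] [AddCommGroup V] [Module R V]

theorem homPreLie_iff_leftMul_commutator (m : V →ₗ[R] V →ₗ[R] V) (β : V → V) (u v w : V) :
    m (m u v) (β w) - m (β u) (m v w) = m (m v u) (β w) - m (β v) (m u w) ↔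
      m (m u v - m v u) (β w) = m (β u) (m v w) - m (β v) (m u w) := by
  rw [map_sub, LinearMap.sub_apply, sub_eq_sub_iff_sub_eq_sub]

theorem homPreLie_of_Ooperator_general
    (br : A → A → A) (α : A → A) (ρ : A →ₗ[R] V →ₗ[R] V) (β : V → V)
    (hρ : ∀ (x y : A) (v : V), ρ (br x y) (β v) = ρ (α x) (ρ y v) - ρ (α y) (ρ x v))
    (T : V →ₗ[R] A)
    (hTβ : ∀ v : V, α (T v) = T (β v))
    (hT : ∀ u v : V, br (T u) (T v) = T (ρ (T u) v - ρ (T v) u))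
    (star : V → V → V)
    (hstar : ∀ u v : V, star u v = ρ (T u) v)
    (u v w : V) :
    star (star u v) (β w) - star (β u) (star v w) =
      star (star v u) (β w) - star (β v) (star u w) := by
  simp only [hstar]
  refine (homPreLie_iff_leftMul_commutator (ρ ∘ₗ T) β u v w).mpr ?_
  calc ρ (T (ρ (T u) v - ρ (T v) u)) (β w)
      = ρ (br (T u) (T v)) (β w) := by rw [hT]
    _ = ρ (α (T u)) (ρ (T v) w) - ρ (α (T v)) (ρ (T u) w) := hρ (T u) (T v) w
    _ = ρ (T (β u)) (ρ (T v) w) - ρ (T (β v)) (ρ (T u) w) := by rw [hTβ, hTβ]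

end HomPreLie

/-- An O-operator on a Hom-Lie algebra induces a Hom-pre-Lie
algebra structure on the representation space. -/
theorem homPreLie_of_Ooperator
    {K A V : Type*} [Field K] [CharZero K]
    [AddCommGroup A] [Module K A] [AddCommGroup V] [Module K V]
    (br : A →ₗ[K] A →ₗ[K] A) (α : A →ₗ[K] A)
    (hskew : ∀ x y : A, br x y = - br y x)
    (hjac : ∀ x y z : A, br (α x) (br y z) + br (α y) (br z x) + br (α z) (br x y) = 0)
    (ρ : A →ₗ[K] V →ₗ[K] V) (β : V →ₗ[K] V)
    (hρ1 : ∀ (x y : A) (v : V), ρ (br x y) (β v) = ρ (α x) (ρ y v) - ρ (α y) (ρ x v))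
    (hρ2 : ∀ (x : A) (v : V), β (ρ x v) = ρ (α x) (β v))
    (T : V →ₗ[K] A)
    (hTβ : ∀ v : V, α (T v) = T (β v))
    (hT : ∀ u v : V, br (T u) (T v) = T (ρ (T u) v - ρ (T v) u))
    (star : V → V → V)
    (hstar : ∀ u v : V, star u v = ρ (T u) v) :
    ∀ u v w : V,
      star (star u v) (β w) - star (β u) (star v w) =
        star (star v u) (β w) - star (β v) (star u w) :=
  homPreLie_of_Ooperator_general (br · ·) α ρ β hρ1 T hTβ hT star hstar
end
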